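/- For every integer r ≥ 2 there exists a constant b_r > 0 such that for every integer d ≥ 1 there are infinitely many integers n for which there exists an (r+1)-graph H on n vertices with maximum r-degree at most d and α(H) ≤ b_r·((n/d)·log(n/d))^{1/r}. -/

import Mathlib

open Finset
open scoped Classical

/-- `Z` is an independent set of the hypergraph `H`: it contains no edge. -/
def IsIndep {V : Type*} [DecidableEq V] (H : Finset (Finset V)) (Z : Finset V) : Prop :=
  ∀ e ∈ H, ¬ e ⊆ Z

/-- The independence number of a hypergraph on a finite vertex type. -/
noncomputable def indepNum {V : Type*} [Fintype V] [DecidableEq V]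
    (H : Finset (Finset V)) : ℕ :=
  ((Finset.univ : Finset V).powerset.filter (fun Z => IsIndep H Z)).sup Finset.card

/-- `H` has maximum `r`-degree at most `d`: every `r`-element vertex set is
contained in at most `d` edges. -/
def maxDegLe {V : Type*} [DecidableEq V] (r : ℕ) (H : Finset (Finset V)) (d : ℕ) : Prop :=
  ∀ S : Finset V, S.card = r → (H.filter (fun e => S ⊆ e)).card ≤ d

/-! Choose a random `(r + 1)`-graph `H` on `d * N` vertices and let `K ⊆ H` be maximal subject to
having `r`-degree at most `d`. If a `t`-set `S` is independent in `K`, then, by maximality, every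
edge of `H` inside `S` contains an `r`-set that lies in `d` edges of `K`, all of which leave `S` and
so meet it exactly in that `r`-set. Hence either `H` has unusually many edges meeting `S` in exactly
`r` vertices, or the edges of `H` leaving `S` determine a family containing at least half of the
`(r + 1)`-subsets of `S` which `H` avoids altogether. For `t` of order `(N * log N) ^ (1 / r)` each
of these events has probability at most `exp (-3 * t * log N)`, while there are at most
`exp (2 * t * log N)` sets `S`. -/

section RandomSubset

variable {α ι : Type*} {p : ℝ}

/-- The probability that the binomial random subset of `E`, which contains each element of `E`
independently with probability `p`, is equal to `H ⊆ E`. -/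
noncomputable def subsetWeight (p : ℝ) (E H : Finset α) : ℝ :=
  p ^ #H * (1 - p) ^ (#E - #H)

/-- The probability that the binomial random subset of `E` satisfies `P`. All outcomes lie in the
finite set `E.powerset`, so a finite sum over outcomes replaces a measure. -/
noncomputable def subsetProb (p : ℝ) (E : Finset α) (P : Finset α → Prop) : ℝ :=
  ∑ H ∈ E.powerset with P H, subsetWeight p E H

lemma subsetWeight_nonneg (hp : p ∈ Set.Icc 0 1) (E H : Finset α) : 0 ≤ subsetWeight p E H :=
  mul_nonneg (pow_nonneg hp.1 _) (pow_nonneg (sub_nonneg.2 hp.2) _)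

lemma subsetWeight_union [DecidableEq α] {A B U W : Finset α} (hAB : Disjoint A B)
    (hU : U ⊆ A) (hW : W ⊆ B) :
    subsetWeight p (A ∪ B) (U ∪ W) = subsetWeight p A U * subsetWeight p B W := by
  have hcard : #A + #B - (#U + #W) = (#A - #U) + (#B - #W) := by
    have := card_le_card hU
    have := card_le_card hW
    omega
  rw [subsetWeight, card_union_of_disjoint hAB, card_union_of_disjoint (hAB.mono hU hW), hcard,
    pow_add, pow_add, subsetWeight, subsetWeight]
  ring

lemma sum_subsetWeight (p : ℝ) (E : Finset α) : ∑ H ∈ E.powerset, subsetWeight p E H = 1 := by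
  simp only [subsetWeight, sum_pow_mul_eq_add_pow, add_sub_cancel, one_pow]

lemma subsetProb_congr {E : Finset α} {P Q : Finset α → Prop} (h : ∀ H ⊆ E, (P H ↔ Q H)) :
    subsetProb p E P = subsetProb p E Q :=
  sum_congr (by grind) fun _ _ ↦ rfl

lemma subsetProb_true (p : ℝ) (E : Finset α) : subsetProb p E (fun _ ↦ True) = 1 := by
  rw [subsetProb, filter_true, sum_subsetWeight]

lemma subsetProb_or_le (hp : p ∈ Set.Icc 0 1) (E : Finset α) (P Q : Finset α → Prop) :
    subsetProb p E (fun H ↦ P H ∨ Q H) ≤ subsetProb p E P + subsetProb p E Q := by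
  simp only [subsetProb, sum_filter, ← sum_add_distrib]
  refine sum_le_sum fun H _ ↦ ?_
  have := subsetWeight_nonneg hp E H
  by_cases hP : P H <;> by_cases hQ : Q H <;> simp [hP, hQ, this]

lemma subsetProb_exists_le (hp : p ∈ Set.Icc 0 1) (E : Finset α) (s : Finset ι)
    (P : ι → Finset α → Prop) :
    subsetProb p E (fun H ↦ ∃ i ∈ s, P i H) ≤ ∑ i ∈ s, subsetProb p E (P i) := by
  simp only [subsetProb, sum_filter]
  rw [sum_comm]
  refine sum_le_sum fun H _ ↦ ?_
  have hnonneg : ∀ i ∈ s, 0 ≤ if P i H then subsetWeight p E H else 0 := fun i _ ↦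
    ite_nonneg (subsetWeight_nonneg hp E H) le_rfl
  split_ifs with h
  · obtain ⟨i, hi, hPi⟩ := h
    simpa only [if_pos hPi] using single_le_sum hnonneg hi
  · exact sum_nonneg hnonneg

lemma exists_subset_forall_not_of_sum_subsetProb_lt_one (hp : p ∈ Set.Icc 0 1) {E : Finset α}
    {s : Finset ι} {P : ι → Finset α → Prop} (h : ∑ i ∈ s, subsetProb p E (P i) < 1) :
    ∃ H ⊆ E, ∀ i ∈ s, ¬ P i H := by
  by_contra! hbad
  have hone : subsetProb p E (fun H ↦ ∃ i ∈ s, P i H) = 1 := by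
    rw [← subsetProb_true p E]
    exact subsetProb_congr fun H hH ↦ iff_true_intro (hbad H hH)
  exact (subsetProb_exists_le hp E s P).not_gt (hone ▸ h)

lemma sum_powerset_union [DecidableEq α] {M : Type*} [AddCommMonoid M] {A B : Finset α}
    (hAB : Disjoint A B) (f : Finset α → M) :
    ∑ H ∈ (A ∪ B).powerset, f H = ∑ U ∈ A.powerset, ∑ W ∈ B.powerset, f (U ∪ W) := by
  rw [← sum_product', eq_comm]
  refine sum_nbij' (fun q ↦ q.1 ∪ q.2) (fun H ↦ (H ∩ A, H ∩ B)) (by grind) (by grind) ?_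
    (by grind) (fun _ _ ↦ rfl)
  rintro ⟨U, W⟩ hUW
  have hAB := disjoint_left.1 hAB
  simp only [mem_product, mem_powerset] at hUW
  exact Prod.ext (by grind) (by grind)

lemma subsetProb_union [DecidableEq α] {A B : Finset α} (hAB : Disjoint A B) (P : Finset α → Prop) :
    subsetProb p (A ∪ B) P =
      ∑ U ∈ A.powerset, subsetWeight p A U * subsetProb p B (fun W ↦ P (U ∪ W)) := by
  simp only [subsetProb, sum_filter, sum_powerset_union hAB, mul_sum, mul_ite, mul_zero]
  refine sum_congr rfl fun U hU ↦ sum_congr rfl fun W hW ↦ ?_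
  rw [subsetWeight_union hAB (mem_powerset.1 hU) (mem_powerset.1 hW)]

lemma subsetProb_inter [DecidableEq α] {A E : Finset α} (hA : A ⊆ E) (P : Finset α → Prop) :
    subsetProb p E (fun H ↦ P (H ∩ A)) = subsetProb p A P := by
  have hunion := subsetProb_union (p := p) (sdiff_disjoint (s := A) (t := E)) (fun H ↦ P (H ∩ A))
  rw [sdiff_union_of_subset hA] at hunion
  have hinner : ∀ U ∈ (E \ A).powerset,
      subsetProb p A (fun W ↦ P ((U ∪ W) ∩ A)) = subsetProb p A P :=
    fun U hU ↦ subsetProb_congr fun W hW ↦ by rw [show (U ∪ W) ∩ A = W by grind]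
  rw [hunion, sum_congr rfl fun U hU ↦ by rw [hinner U hU], ← sum_mul, sum_subsetWeight, one_mul]

lemma subsetProb_eq {A E : Finset α} (hA : A ⊆ E) :
    subsetProb p E (fun H ↦ H = A) = subsetWeight p E A :=
  (sum_congr (by grind) fun _ _ ↦ rfl).trans (sum_singleton (subsetWeight p E) A)

lemma subsetProb_superset {A E : Finset α} (hA : A ⊆ E) :
    subsetProb p E (fun H ↦ A ⊆ H) = p ^ #A := by
  simp_rw [← inter_eq_right]
  rw [subsetProb_inter hA (fun H ↦ H = A), subsetProb_eq Subset.rfl]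
  simp [subsetWeight]

lemma subsetProb_disjoint {A E : Finset α} (hA : A ⊆ E) :
    subsetProb p E (fun H ↦ Disjoint H A) = (1 - p) ^ #A := by
  simp_rw [disjoint_iff_inter_eq_empty]
  rw [subsetProb_inter hA (fun H ↦ H = ∅), subsetProb_eq (empty_subset A)]
  simp [subsetWeight]

lemma subsetProb_le_card_inter [DecidableEq α] (hp : p ∈ Set.Icc 0 1) {A E : Finset α}
    (hA : A ⊆ E) (L : ℕ) :
    subsetProb p E (fun H ↦ L ≤ #(H ∩ A)) ≤ (#A).choose L * p ^ L := by
  have hsub : ∀ H : Finset α, L ≤ #(H ∩ A) ↔ ∃ K ∈ A.powersetCard L, K ⊆ H := by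
    intro H
    simp only [le_card_iff_exists_subset_card, subset_inter_iff, mem_powersetCard]
    grind
  calc subsetProb p E (fun H ↦ L ≤ #(H ∩ A))
      ≤ ∑ K ∈ A.powersetCard L, subsetProb p E (fun H ↦ K ⊆ H) := by
        simp_rw [hsub]
        exact subsetProb_exists_le hp E _ _
    _ = #(A.powersetCard L) • p ^ L := by
        refine sum_eq_card_nsmul fun K hK ↦ ?_
        obtain ⟨hKA, hKL⟩ := mem_powersetCard.1 hK
        rw [subsetProb_superset (hKA.trans hA), hKL]
    _ = (#A).choose L * p ^ L := by
        rw [card_powersetCard, nsmul_eq_mul]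

/- The parts of the random set outside and inside `I` are independent, so the random set `g (H \ I)`
may be regarded as fixed when asking whether `H` avoids it. -/
lemma subsetProb_disjoint_sdiff_le [DecidableEq α] (hp : p ∈ Set.Icc 0 1) {I E : Finset α}
    (hI : I ⊆ E) (a : ℕ) {g : Finset α → Finset α} (hg : ∀ U, g U ⊆ I) :
    subsetProb p E (fun H ↦ a ≤ #(g (H \ I)) ∧ Disjoint H (g (H \ I))) ≤ (1 - p) ^ a := by
  have hq : 0 ≤ 1 - p := sub_nonneg.2 hp.2
  have hinner : ∀ U ∈ (E \ I).powerset, subsetProb p I (fun W ↦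
      a ≤ #(g ((U ∪ W) \ I)) ∧ Disjoint (U ∪ W) (g ((U ∪ W) \ I))) ≤ (1 - p) ^ a := by
    intro U hU
    have hUI : Disjoint U I := sdiff_disjoint.mono_left (mem_powerset.1 hU)
    have hevent : ∀ W ⊆ I, (a ≤ #(g ((U ∪ W) \ I)) ∧ Disjoint (U ∪ W) (g ((U ∪ W) \ I)) ↔
        a ≤ #(g U) ∧ Disjoint W (g U)) := fun W hW ↦ by
      rw [show (U ∪ W) \ I = U by grind [disjoint_left], disjoint_union_left,
        and_iff_right (hUI.mono_right (hg U))]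
    rw [subsetProb_congr hevent]
    by_cases ha : a ≤ #(g U)
    · calc subsetProb p I (fun W ↦ a ≤ #(g U) ∧ Disjoint W (g U)) = (1 - p) ^ #(g U) := by
            simp_rw [ha, true_and, subsetProb_disjoint (hg U)]
        _ ≤ (1 - p) ^ a := pow_le_pow_of_le_one hq (sub_le_self 1 hp.1) ha
    · simpa [ha, subsetProb] using pow_nonneg hq a
  calc subsetProb p E _ = subsetProb p ((E \ I) ∪ I) _ := by rw [sdiff_union_of_subset hI]
    _ ≤ ∑ U ∈ (E \ I).powerset, subsetWeight p (E \ I) U * (1 - p) ^ a := by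
        rw [subsetProb_union sdiff_disjoint]
        exact sum_le_sum fun U hU ↦
          mul_le_mul_of_nonneg_left (hinner U hU) (subsetWeight_nonneg hp _ _)
    _ = (1 - p) ^ a := by rw [← sum_mul, sum_subsetWeight, one_mul]

end RandomSubset

section Hypergraph

variable {V : Type*} [DecidableEq V] {r d : ℕ} {S : Finset V} {U H K : Finset (Finset V)}

/-- The edges of the complete `(r + 1)`-graph that meet `S` in exactly `r` vertices. They
are the edges outside `S` that contribute to the degree of some `r`-subset of `S`. -/
def crossingEdges [Fintype V] (r : ℕ) (S : Finset V) : Finset (Finset V) :=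
  {e ∈ univ.powersetCard (r + 1) | #(e ∩ S) = r}

/-- The `r`-subsets of `S` that lie in at least `d` edges of `U`, so that adding another edge to `U`
through such a set would raise its degree above `d`. -/
def saturatedSubsets (r d : ℕ) (S : Finset V) (U : Finset (Finset V)) : Finset (Finset V) :=
  {X ∈ S.powersetCard r | d ≤ #{e ∈ U | X ⊆ e}}

/-- The `(r + 1)`-subsets of `S` that contain no saturated `r`-subset. When `U` consists of the
edges of `H` not inside `S`, and `S` is independent in a maximal subgraph of `H` of bounded degree,
`H` has no such edge. -/
def openEdges (r d : ℕ) (S : Finset V) (U : Finset (Finset V)) : Finset (Finset V) :=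
  {e ∈ S.powersetCard (r + 1) | ∀ X ∈ e.powersetCard r, X ∉ saturatedSubsets r d S U}

lemma openEdges_subset : openEdges r d S U ⊆ S.powersetCard (r + 1) :=
  filter_subset _ _

lemma exists_maximal_maxDegLe (r d : ℕ) (H : Finset (Finset V)) :
    ∃ K, Maximal (fun K ↦ K ⊆ H ∧ maxDegLe r K d) K := by
  have hempty : maxDegLe r (∅ : Finset (Finset V)) d := fun S _ ↦ by simp
  simpa using exists_maximal (s := {K ∈ H.powerset | maxDegLe r K d}) ⟨∅, by simp [hempty]⟩

lemma exists_le_card_of_maximal_maxDegLe (hK : Maximal (fun K ↦ K ⊆ H ∧ maxDegLe r K d) K)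
    {e : Finset V} (heH : e ∈ H) (heK : e ∉ K) :
    ∃ X ∈ e.powersetCard r, d ≤ #{f ∈ K | X ⊆ f} := by
  by_contra! hlt
  refine heK (hK.le_of_ge ⟨insert_subset heH hK.prop.1, fun X hX ↦ ?_⟩ (subset_insert e K)
    (mem_insert_self e K))
  rw [filter_insert]
  split_ifs with hXe
  · exact (card_insert_le _ _).trans (hlt X (mem_powersetCard.2 ⟨hXe, hX⟩))
  · exact hK.prop.2 X hX

lemma disjoint_openEdges_of_maximal_maxDegLe
    (hK : Maximal (fun K ↦ K ⊆ H ∧ maxDegLe r K d) K) (hS : IsIndep K S) :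
    Disjoint H (openEdges r d S (H \ S.powersetCard (r + 1))) := by
  rw [disjoint_left]
  intro e heH heOpen
  obtain ⟨heS, hunsaturated⟩ := mem_filter.1 heOpen
  have heS' := (mem_powersetCard.1 heS).1
  obtain ⟨X, hXe, hdX⟩ := exists_le_card_of_maximal_maxDegLe hK heH fun heK ↦ hS e heK heS'
  have hKU : K ⊆ H \ S.powersetCard (r + 1) := fun f hf ↦
    mem_sdiff.2 ⟨hK.prop.1 hf, fun hfS ↦ hS f hf (mem_powersetCard.1 hfS).1⟩
  exact hunsaturated X hXe <| mem_filter.2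
    ⟨powersetCard_mono heS' hXe, hdX.trans (card_le_card (filter_subset_filter _ hKU))⟩

lemma choose_succ_le_card_openEdges_add (r d : ℕ) (S : Finset V) (U : Finset (Finset V)) :
    (#S).choose (r + 1) ≤ #(openEdges r d S U) + #(saturatedSubsets r d S U) * #S := by
  have hcover : S.powersetCard (r + 1) ⊆
      openEdges r d S U ∪ image₂ insert S (saturatedSubsets r d S U) := by
    intro e he
    by_cases hopen : e ∈ openEdges r d S U
    · exact mem_union_left _ hopen
    obtain ⟨X, hX, hsat⟩ : ∃ X ∈ e.powersetCard r, X ∈ saturatedSubsets r d S U := by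
      simpa [openEdges, he, and_assoc] using hopen
    obtain ⟨heS, her⟩ := mem_powersetCard.1 he
    obtain ⟨hXe, hXr⟩ := mem_powersetCard.1 hX
    obtain ⟨v, -, rfl⟩ := exists_eq_insert_iff.2 ⟨hXe, by omega⟩
    exact mem_union_right _ (mem_image₂_of_mem (heS (mem_insert_self v X)) hsat)
  calc (#S).choose (r + 1) = #(S.powersetCard (r + 1)) := (card_powersetCard _ _).symm
    _ ≤ #(openEdges r d S U) + #(image₂ insert S (saturatedSubsets r d S U)) :=
      (card_le_card hcover).trans (card_union_le _ _)
    _ ≤ #(openEdges r d S U) + #(saturatedSubsets r d S U) * #S := by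
      rw [mul_comm]
      gcongr
      exact card_image₂_le _ _ _

lemma inter_eq_of_not_subset {X e : Finset V} (hX : #X = r) (he : #e = r + 1) (hXS : X ⊆ S)
    (hXe : X ⊆ e) (heS : ¬ e ⊆ S) : e ∩ S = X := by
  have hlt : #(e ∩ S) < #e := card_lt_card
    (inter_subset_left.ssubset_of_ne fun h ↦ heS (inter_eq_left.1 h))
  exact (eq_of_subset_of_card_le (subset_inter hXe hXS) (by omega)).symm

variable [Fintype V]

lemma card_crossingEdges_le (r : ℕ) (S : Finset V) :
    #(crossingEdges r S) ≤ (#S).choose r * Fintype.card V := by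
  have hcover : crossingEdges r S ⊆ image₂ insert univ (S.powersetCard r) := by
    intro e he
    obtain ⟨he, hcard⟩ := mem_filter.1 he
    obtain ⟨v, -, hv⟩ := exists_eq_insert_iff.2
      ⟨inter_subset_left (s₁ := e) (s₂ := S), by rw [hcard, (mem_powersetCard.1 he).2]⟩
    exact hv ▸ mem_image₂_of_mem (mem_univ v) (mem_powersetCard.2 ⟨inter_subset_right, hcard⟩)
  calc #(crossingEdges r S) ≤ #(univ : Finset V) * #(S.powersetCard r) :=
        (card_le_card hcover).trans (card_image₂_le _ _ _)
    _ = (#S).choose r * Fintype.card V := by rw [card_powersetCard, card_univ, mul_comm]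

lemma mul_card_saturatedSubsets_le (hH : H ⊆ univ.powersetCard (r + 1)) (d : ℕ) (S : Finset V) :
    d * #(saturatedSubsets r d S (H \ S.powersetCard (r + 1))) ≤ #(H ∩ crossingEdges r S) := by
  set U := H \ S.powersetCard (r + 1)
  have htrace : ∀ X ∈ saturatedSubsets r d S U, ∀ e ∈ U, X ⊆ e → e ∩ S = X := by
    intro X hX e he hXe
    obtain ⟨hXS, hXr⟩ := mem_powersetCard.1 (mem_filter.1 hX).1
    obtain ⟨heH, heS⟩ := mem_sdiff.1 he
    have her := (mem_powersetCard.1 (hH heH)).2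
    exact inter_eq_of_not_subset hXr her hXS hXe fun h ↦ heS (mem_powersetCard.2 ⟨h, her⟩)
  have hfiber : ∀ X ∈ saturatedSubsets r d S U, d ≤ #{e ∈ H ∩ crossingEdges r S | e ∩ S = X} := by
    intro X hX
    refine (mem_filter.1 hX).2.trans (card_le_card fun e he ↦ ?_)
    obtain ⟨heU, hXe⟩ := mem_filter.1 he
    have heH := (mem_sdiff.1 heU).1
    have heX := htrace X hX e heU hXe
    have hXr := (mem_powersetCard.1 (mem_filter.1 hX).1).2
    simp only [crossingEdges, mem_filter, mem_inter, hH heH, heH, heX, hXr, true_and]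
  calc d * #(saturatedSubsets r d S U)
      ≤ ∑ X ∈ saturatedSubsets r d S U, #{e ∈ H ∩ crossingEdges r S | e ∩ S = X} := by
        rw [mul_comm, ← smul_eq_mul]
        exact card_nsmul_le_sum _ _ _ hfiber
    _ ≤ #(H ∩ crossingEdges r S) := by
        rw [sum_card_fiberwise_eq_card_filter]
        exact card_filter_le _ _

lemma card_openEdges_of_card_crossingEdges_lt (hH : H ⊆ univ.powersetCard (r + 1)) {k : ℕ}
    (hcross : #(H ∩ crossingEdges r S) < d * (k + 1)) :
    (#S).choose (r + 1) ≤ #(openEdges r d S (H \ S.powersetCard (r + 1))) + k * #S := by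
  set U := H \ S.powersetCard (r + 1)
  have hsat : #(saturatedSubsets r d S U) ≤ k := Nat.lt_succ_iff.1 <|
    lt_of_mul_lt_mul_left ((mul_card_saturatedSubsets_le hH d S).trans_lt hcross) d.zero_le
  exact (choose_succ_le_card_openEdges_add r d S U).trans (by gcongr)

lemma indepNum_lt_of_forall_not_isIndep {t : ℕ} (ht : 0 < t)
    (h : ∀ S : Finset V, #S = t → ¬ IsIndep H S) :
    indepNum H < t := by
  rw [indepNum, Finset.sup_lt_iff ht]
  intro Z hZ
  by_contra! htZ
  obtain ⟨S, hSZ, hSt⟩ := exists_subset_card_eq htZ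
  exact h S hSt fun e he heS ↦ (mem_filter.1 hZ).2 e he (heS.trans hSZ)

theorem exists_maxDegLe_indepNum_lt {t k a : ℕ} {p : ℝ} (hp : p ∈ Set.Icc 0 1) (ht : 0 < t)
    (hak : a + k * t ≤ t.choose (r + 1))
    (hlt : ((Fintype.card V).choose t : ℝ) *
      (((t.choose r * Fintype.card V).choose (d * (k + 1)) : ℝ) * p ^ (d * (k + 1)) +
        (1 - p) ^ a) < 1) :
    ∃ H : Finset (Finset V), (∀ e ∈ H, #e = r + 1) ∧ maxDegLe r H d ∧ indepNum H < t := by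
  set E : Finset (Finset V) := univ.powersetCard (r + 1)
  set manyCrossing : Finset V → Finset (Finset V) → Prop := fun S H ↦
    d * (k + 1) ≤ #(H ∩ crossingEdges r S)
  set avoidsOpen : Finset V → Finset (Finset V) → Prop := fun S H ↦
    a ≤ #(openEdges r d S (H \ S.powersetCard (r + 1))) ∧
      Disjoint H (openEdges r d S (H \ S.powersetCard (r + 1)))
  have hcrossing : ∀ S ∈ univ.powersetCard t, subsetProb p E (manyCrossing S) ≤
      ((t.choose r * Fintype.card V).choose (d * (k + 1)) : ℝ) * p ^ (d * (k + 1)) := by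
    intro S hS
    have hcard := card_crossingEdges_le r S
    rw [(mem_powersetCard.1 hS).2] at hcard
    refine (subsetProb_le_card_inter hp (filter_subset _ _) _).trans ?_
    exact mul_le_mul_of_nonneg_right (mod_cast Nat.choose_le_choose _ hcard) (pow_nonneg hp.1 _)
  have havoid : ∀ S, subsetProb p E (avoidsOpen S) ≤ (1 - p) ^ a := fun S ↦
    subsetProb_disjoint_sdiff_le hp (powersetCard_mono (subset_univ S)) a fun _ ↦ openEdges_subset
  obtain ⟨H, hHE, hH⟩ := exists_subset_forall_not_of_sum_subsetProb_lt_one hp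
    (s := univ.powersetCard t) (P := fun S H ↦ manyCrossing S H ∨ avoidsOpen S H) <| by
    refine lt_of_le_of_lt ?_ hlt
    rw [← card_univ, ← card_powersetCard, ← nsmul_eq_mul]
    exact sum_le_card_nsmul _ _ _ fun S hS ↦
      (subsetProb_or_le hp E _ _).trans (add_le_add (hcrossing S hS) (havoid S))
  obtain ⟨K, hK⟩ := exists_maximal_maxDegLe r d H
  refine ⟨K, fun e he ↦ (mem_powersetCard.1 (hHE (hK.prop.1 he))).2, hK.prop.2,
    indepNum_lt_of_forall_not_isIndep ht fun S hS hindep ↦ ?_⟩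
  obtain ⟨hfew, hnotAvoid⟩ := not_or.1 (hH S (mem_powersetCard.2 ⟨subset_univ S, hS⟩))
  have hopen := card_openEdges_of_card_crossingEdges_lt hHE (not_le.1 hfew)
  rw [hS] at hopen
  exact hnotAvoid ⟨by omega, disjoint_openEdges_of_maximal_maxDegLe hK hindep⟩

end Hypergraph

section Estimates

lemma choose_mul_pow_le {B L : ℕ} {p q : ℝ} (hp : 0 ≤ p) (hq : 0 ≤ q) (h : B * p ≤ q * L) :
    (B.choose L : ℝ) * p ^ L ≤ (q * Real.exp 1) ^ L := by
  calc (B.choose L : ℝ) * p ^ L ≤ (B : ℝ) ^ L / L.factorial * p ^ L := by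
        gcongr
        exact Nat.choose_le_pow_div L B
    _ = (B * p) ^ L / L.factorial := by rw [mul_pow, div_mul_eq_mul_div]
    _ ≤ (q * L) ^ L / L.factorial := by gcongr
    _ = q ^ L * ((L : ℝ) ^ L / L.factorial) := by rw [mul_pow, mul_div_assoc]
    _ ≤ q ^ L * Real.exp L := by
        gcongr
        exact Real.pow_div_factorial_le_exp _ L.cast_nonneg _
    _ = (q * Real.exp 1) ^ L := by rw [mul_pow, ← Real.exp_nat_mul, mul_one]

lemma one_sub_pow_le_exp_neg {p : ℝ} (hp : p ≤ 1) (a : ℕ) : (1 - p) ^ a ≤ Real.exp (-(a * p)) :=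
  calc (1 - p) ^ a ≤ Real.exp (-p) ^ a :=
        pow_le_pow_left₀ (sub_nonneg.2 hp) (Real.one_sub_le_exp_neg p) a
    _ = Real.exp (-(a * p)) := by rw [← Real.exp_nat_mul, mul_neg]

lemma choose_mul_le_exp {d N : ℕ} (hN : 0 < N) (hdN : d ≤ N) (t : ℕ) :
    ((d * N).choose t : ℝ) ≤ Real.exp (2 * (t * Real.log N)) := by
  calc ((d * N).choose t : ℝ) ≤ ((N * N : ℕ) : ℝ) ^ t := by
        exact_mod_cast (Nat.choose_le_pow _ _).trans (Nat.pow_le_pow_left (by gcongr) t)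
    _ = Real.exp (Real.log N) ^ (2 * t) := by
        rw [Real.exp_log (by positivity), pow_mul, Nat.cast_mul, sq]
    _ = Real.exp (2 * (t * Real.log N)) := by
        rw [← Real.exp_nat_mul, Nat.cast_mul, Nat.cast_ofNat, mul_assoc]

lemma mul_add_lt_one_of_le_exp {M u v x : ℝ} (hx : Real.log 2 < x) (hu : 0 ≤ u) (hv : 0 ≤ v)
    (hM : M ≤ Real.exp (2 * x)) (hux : u ≤ Real.exp (-(3 * x))) (hvx : v ≤ Real.exp (-(3 * x))) :
    M * (u + v) < 1 := by
  calc M * (u + v) ≤ Real.exp (2 * x) * (Real.exp (-(3 * x)) + Real.exp (-(3 * x))) := by gcongr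
    _ = Real.exp (Real.log 2 - x) := by
        rw [← two_mul, mul_left_comm, ← Real.exp_add, Real.exp_sub, Real.exp_log two_pos,
          div_eq_mul_inv, ← Real.exp_neg]
        ring_nf
    _ < 1 := Real.exp_lt_one_iff.2 (sub_neg.2 hx)

lemma choose_mul_self_le {r t : ℕ} (h : 2 * r ≤ t) :
    t.choose r * t ≤ 2 * (r + 1) * t.choose (r + 1) := by
  calc t.choose r * t ≤ t.choose r * (2 * (t - r)) := by gcongr; omega
    _ = 2 * (r + 1) * t.choose (r + 1) := by
        rw [mul_left_comm, ← Nat.choose_succ_right_eq]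
        ring

lemma pow_le_mul_choose {r t : ℕ} (h : 2 * r ≤ t) :
    (t : ℝ) ^ r ≤ 2 ^ r * r.factorial * t.choose r := by
  have hhalf : (t : ℝ) ≤ 2 * (t + 1 - r : ℕ) := by exact_mod_cast (by omega)
  calc (t : ℝ) ^ r ≤ (2 * (t + 1 - r : ℕ)) ^ r := by gcongr
    _ = 2 ^ r * r.factorial * ((t + 1 - r : ℕ) ^ r / r.factorial) := by
        rw [mul_pow]
        field_simp
    _ ≤ 2 ^ r * r.factorial * t.choose r := by
        gcongr
        exact Nat.pow_le_choose r t

lemma exists_add_div_mul_le_choose {r t : ℕ} (h : 2 * r ≤ t) :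
    ∃ a, a + t.choose r / (4 * (r + 1)) * t ≤ t.choose (r + 1) ∧
      t.choose r * t ≤ 4 * (r + 1) * a := by
  set k := t.choose r / (4 * (r + 1))
  have hchoose := choose_mul_self_le h
  have hk : 2 * (k * t) ≤ t.choose (r + 1) := by
    refine le_of_mul_le_mul_left ?_ (by positivity : 0 < 2 * (r + 1))
    calc 2 * (r + 1) * (2 * (k * t)) = 4 * (r + 1) * k * t := by ring
      _ ≤ t.choose r * t := by gcongr; exact Nat.mul_div_le _ _
      _ ≤ 2 * (r + 1) * t.choose (r + 1) := hchoose
  refine ⟨t.choose (r + 1) - k * t, by omega, hchoose.trans ?_⟩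
  calc 2 * (r + 1) * t.choose (r + 1)
      ≤ 2 * (r + 1) * (2 * (t.choose (r + 1) - k * t)) := by gcongr; omega
    _ = 4 * (r + 1) * (t.choose (r + 1) - k * t) := by ring

/-- The probability with which the random hypergraph on `d * N` vertices contains an edge; `s` is
`4 * (r + 1)` in the application. The factor `exp (-2)` offsets the factor `exp L` in
`B.choose L ≤ (exp 1 * B / L) ^ L`. -/
noncomputable def edgeProb (s N : ℕ) : ℝ :=
  Real.exp (-2) / (s * N)

lemma edgeProb_mem_Icc {s N : ℕ} (hs : 0 < s) (hN : 0 < N) : edgeProb s N ∈ Set.Icc 0 1 := by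
  have hsN : (1 : ℝ) ≤ s * N := by exact_mod_cast Nat.mul_pos hs hN
  refine ⟨by unfold edgeProb; positivity, div_le_one_of_le₀ ?_ (by positivity)⟩
  exact (Real.exp_le_one_iff.2 (by norm_num)).trans hsN

lemma mul_edgeProb_le {s N : ℕ} (hs : 0 < s) (hN : 0 < N) (T d : ℕ) :
    ((T * (d * N) : ℕ) : ℝ) * edgeProb s N ≤ Real.exp (-2) * (d * (T / s + 1) : ℕ) := by
  have hTs : (T : ℝ) ≤ s * (T / s + 1 : ℕ) := by exact_mod_cast (Nat.lt_mul_div_succ T hs).le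
  calc ((T * (d * N) : ℕ) : ℝ) * edgeProb s N = T * (Real.exp (-2) * d / s) := by
        rw [edgeProb]
        push_cast
        field_simp
    _ ≤ s * (T / s + 1 : ℕ) * (Real.exp (-2) * d / s) := by gcongr
    _ = Real.exp (-2) * (d * (T / s + 1) : ℕ) := by
        push_cast
        field_simp

lemma choose_mul_edgeProb_pow_le {s T d N t : ℕ} (hs : 0 < s) (hd : 1 ≤ d) (hN : 0 < N)
    (htN : t ≤ 2 * N) (hT : 3 * Real.exp 2 * s ^ 2 * N * Real.log N ≤ T) :
    ((T * (d * N)).choose (d * (T / s + 1)) : ℝ) * edgeProb s N ^ (d * (T / s + 1)) ≤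
      Real.exp (-(3 * (t * Real.log N))) := by
  have hTs : (T : ℝ) ≤ s * (T / s + 1 : ℕ) := by exact_mod_cast (Nat.lt_mul_div_succ T hs).le
  have hs' : (1 : ℝ) ≤ s := by exact_mod_cast hs
  have hsize : 3 * (t * Real.log N) ≤ (d * (T / s + 1) : ℕ) := by
    refine le_trans ?_ (Nat.cast_le.2 (Nat.le_mul_of_pos_left _ hd))
    refine le_of_mul_le_mul_left ?_ (by positivity : (0 : ℝ) < s)
    calc s * (3 * (t * Real.log N)) ≤ s ^ 2 * (3 * (Real.exp 2 * N * Real.log N)) := by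
          have htN' : (t : ℝ) ≤ Real.exp 2 * N := by
            have : (t : ℝ) ≤ 2 * N := by exact_mod_cast htN
            exact this.trans (by gcongr; linarith [Real.add_one_le_exp 2])
          gcongr
          exact le_self_pow₀ hs' two_ne_zero
      _ = 3 * Real.exp 2 * s ^ 2 * N * Real.log N := by ring
      _ ≤ s * (T / s + 1 : ℕ) := hT.trans hTs
  calc ((T * (d * N)).choose (d * (T / s + 1)) : ℝ) * edgeProb s N ^ (d * (T / s + 1))
      ≤ (Real.exp (-2) * Real.exp 1) ^ (d * (T / s + 1)) :=
        choose_mul_pow_le (edgeProb_mem_Icc hs hN).1 (Real.exp_pos _).le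
          (mul_edgeProb_le hs hN T d)
    _ = Real.exp (-(d * (T / s + 1) : ℕ)) := by
        rw [← Real.exp_add, ← Real.exp_nat_mul]
        ring_nf
    _ ≤ Real.exp (-(3 * (t * Real.log N))) := Real.exp_le_exp.2 (neg_le_neg hsize)

lemma one_sub_edgeProb_pow_le {s T N t a : ℕ} (hs : 0 < s) (hN : 0 < N)
    (hT : 3 * Real.exp 2 * s ^ 2 * N * Real.log N ≤ T) (ha : T * t ≤ s * a) :
    (1 - edgeProb s N) ^ a ≤ Real.exp (-(3 * (t * Real.log N))) := by
  have hmean : 3 * (t * Real.log N) ≤ a * edgeProb s N := by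
    have ha' : (T : ℝ) * t ≤ s * a := by exact_mod_cast ha
    calc 3 * (t * Real.log N)
        = 3 * Real.exp 2 * s ^ 2 * N * Real.log N * t * (Real.exp (-2) / (s ^ 2 * N)) := by
          rw [Real.exp_neg]
          field_simp
      _ ≤ s * a * (Real.exp (-2) / (s ^ 2 * N)) := by
          gcongr ?_ * _
          exact (mul_le_mul_of_nonneg_right hT t.cast_nonneg).trans ha'
      _ = a * edgeProb s N := by
          rw [edgeProb]
          field_simp
  exact (one_sub_pow_le_exp_neg (edgeProb_mem_Icc hs hN).2 a).trans
    (Real.exp_le_exp.2 (neg_le_neg hmean))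

end Estimates

lemma exists_maxDegLe_indepNum_lt_of_le_choose {r d N t : ℕ} (hd : 1 ≤ d) (hN : 3 ≤ N)
    (hdN : d ≤ N) (ht : 2 * r < t) (htN : t ≤ 2 * N)
    (hT : 48 * Real.exp 2 * (r + 1) ^ 2 * (N * Real.log N) ≤ t.choose r) :
    ∃ H : Finset (Finset (Fin (d * N))),
      (∀ e ∈ H, #e = r + 1) ∧ maxDegLe r H d ∧ indepNum H < t := by
  have hN₀ : 0 < N := by omega
  have ht₀ : 0 < t := by omega
  have hs : 0 < 4 * (r + 1) := by positivity
  have hp := edgeProb_mem_Icc hs hN₀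
  have hT' : 3 * Real.exp 2 * (4 * (r + 1) : ℕ) ^ 2 * N * Real.log N ≤ t.choose r := by
    refine le_of_eq_of_le ?_ hT
    push_cast
    ring
  obtain ⟨a, hak, ha⟩ := exists_add_div_mul_le_choose ht.le
  refine exists_maxDegLe_indepNum_lt hp ht₀ hak ?_
  rw [Fintype.card_fin]
  have hlog : Real.log 2 < t * Real.log N := by
    calc Real.log 2 < Real.log N := Real.log_lt_log two_pos (by exact_mod_cast hN)
      _ ≤ t * Real.log N :=
        le_mul_of_one_le_left (Real.log_natCast_nonneg N) (by exact_mod_cast ht₀)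
  exact mul_add_lt_one_of_le_exp hlog
    (mul_nonneg (Nat.cast_nonneg _) (pow_nonneg hp.1 _)) (pow_nonneg (sub_nonneg.2 hp.2) _)
    (choose_mul_le_exp hN₀ hdN t) (choose_mul_edgeProb_pow_le hs hd hN₀ htN hT')
    (one_sub_edgeProb_pow_le hs hN₀ hT' ha)

/-- The constant `b_r` of the theorem. The factor `2 ^ r * r!` converts the bound
`48 * exp 2 * (r + 1) ^ 2 * N * log N` on `t.choose r` into one on `t ^ r`. -/
noncomputable def indepConst (r : ℕ) : ℝ :=
  2 ^ r * r.factorial * (48 * Real.exp 2 * (r + 1) ^ 2)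

lemma one_le_indepConst (r : ℕ) : 1 ≤ indepConst r := by
  have hexp : 1 ≤ Real.exp 2 := Real.one_le_exp two_pos.le
  have hfact : (1 : ℝ) ≤ r.factorial := by exact_mod_cast r.factorial_pos
  have hpow : (1 : ℝ) ≤ 2 ^ r := one_le_pow₀ one_le_two
  have hr : (1 : ℝ) ≤ (r + 1) ^ 2 := one_le_pow₀ (by simp)
  have h48 : (1 : ℝ) ≤ 48 := by norm_num
  exact one_le_mul_of_one_le_of_one_le (one_le_mul_of_one_le_of_one_le hpow hfact)
    (one_le_mul_of_one_le_of_one_le (one_le_mul_of_one_le_of_one_le h48 hexp) hr)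

lemma eventually_indepConst_pow_mul_log_le (r : ℕ) :
    ∀ᶠ N : ℕ in Filter.atTop, indepConst r ^ r * Real.log N ≤ N := by
  have hpos : 0 < indepConst r ^ r := pow_pos (zero_lt_one.trans_le (one_le_indepConst r)) r
  have hlog := (Real.isLittleO_log_id_atTop.bound (inv_pos.2 hpos)).natCast_atTop
  filter_upwards [hlog] with N hN
  rw [Real.norm_of_nonneg (Real.log_natCast_nonneg N), id, Real.norm_natCast] at hN
  exact (le_inv_mul_iff₀ hpos).1 hN

lemma indepConst_mul_le {r N : ℕ} {x : ℝ} (hr : 2 ≤ r) (hN : 1 ≤ N)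
    (hlogN : indepConst r ^ r * Real.log N ≤ N) (hx : x ^ r = N * Real.log N) :
    indepConst r * x ≤ N := by
  refine le_of_pow_le_pow_left₀ (by omega : r ≠ 0) N.cast_nonneg ?_
  calc (indepConst r * x) ^ r = N * (indepConst r ^ r * Real.log N) := by
        rw [mul_pow, hx, mul_left_comm]
    _ ≤ (N : ℝ) ^ 2 := by rw [sq]; gcongr
    _ ≤ (N : ℝ) ^ r := pow_le_pow_right₀ (by exact_mod_cast hN) hr

lemma le_choose_of_indepConst_mul_le {r t : ℕ} {x : ℝ} (hr : r ≠ 0) (hx : 0 ≤ x)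
    (hrt : 2 * r ≤ t) (hxt : indepConst r * x ≤ t) :
    48 * Real.exp 2 * (r + 1) ^ 2 * x ^ r ≤ t.choose r := by
  have hb := one_le_indepConst r
  refine le_of_mul_le_mul_left ?_ (by positivity : (0 : ℝ) < 2 ^ r * r.factorial)
  calc 2 ^ r * r.factorial * (48 * Real.exp 2 * (r + 1) ^ 2 * x ^ r)
      = indepConst r * x ^ r := by rw [indepConst, ← mul_assoc]
    _ ≤ (indepConst r * x) ^ r := by
        rw [mul_pow]
        gcongr
        exact le_self_pow₀ hb hr
    _ ≤ (t : ℝ) ^ r := by gcongr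
    _ ≤ 2 ^ r * r.factorial * t.choose r := pow_le_mul_choose hrt

theorem exists_maxDegLe_indepNum_le {r d N : ℕ} (hr : 2 ≤ r) (hd : 1 ≤ d) (hN : 3 ≤ N)
    (hdN : d ≤ N) (hrN : (2 * r) ^ r ≤ N) (hlogN : indepConst r ^ r * Real.log N ≤ N) :
    ∃ H : Finset (Finset (Fin (d * N))), (∀ e ∈ H, #e = r + 1) ∧ maxDegLe r H d ∧
      (indepNum H : ℝ) ≤ indepConst r * (N * Real.log N) ^ ((1 : ℝ) / r) := by
  have hr₀ : r ≠ 0 := by omega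
  have hb := one_le_indepConst r
  have hlog : 1 ≤ Real.log N := (Real.le_log_iff_exp_le (by positivity)).2 <|
    Real.exp_one_lt_three.le.trans (by exact_mod_cast hN)
  set x : ℝ := (N * Real.log N) ^ ((1 : ℝ) / r)
  have hx₀ : 0 ≤ x := by positivity
  have hx : x ^ r = N * Real.log N := by
    simp only [x, one_div]
    exact Real.rpow_inv_natCast_pow (by positivity) hr₀
  have hbx : indepConst r * x ≤ N := indepConst_mul_le hr (by omega) hlogN hx
  have hrx : 2 * (r : ℝ) ≤ x := by
    refine le_of_pow_le_pow_left₀ hr₀ hx₀ ?_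
    calc (2 * (r : ℝ)) ^ r ≤ N := by exact_mod_cast hrN
      _ ≤ x ^ r := hx ▸ le_mul_of_one_le_right N.cast_nonneg hlog
  set t : ℕ := ⌊indepConst r * x⌋₊ + 1
  have hbt : indepConst r * x < t := by exact_mod_cast Nat.lt_floor_add_one (indepConst r * x)
  have hrt : 2 * r < t := by
    exact_mod_cast (hrx.trans (le_mul_of_one_le_left hx₀ hb)).trans_lt hbt
  have htN : t ≤ 2 * N := by
    have := Nat.floor_le_of_le hbx
    omega
  have hT := le_choose_of_indepConst_mul_le hr₀ hx₀ hrt.le hbt.le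
  rw [hx] at hT
  obtain ⟨H, hcard, hdeg, hindep⟩ := exists_maxDegLe_indepNum_lt_of_le_choose hd hN hdN hrt htN hT
  exact ⟨H, hcard, hdeg, (Nat.le_floor_iff (by positivity)).1 (Nat.lt_succ_iff.1 hindep)⟩

/-- For every `r ≥ 2` there is `b_r > 0` such that for every `d ≥ 1`
there are infinitely many `n` admitting an `(r+1)`-graph on `n` vertices with maximum
`r`-degree at most `d` and `α(H) ≤ b_r·((n/d)·log(n/d))^(1/r)`. -/
theorem stmt3 (r : ℕ) (hr : 2 ≤ r) :
    ∃ b : ℝ, 0 < b ∧ ∀ d : ℕ, 1 ≤ d → ∀ m : ℕ, ∃ n : ℕ, m ≤ n ∧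
      ∃ H : Finset (Finset (Fin n)),
        (∀ e ∈ H, e.card = r + 1) ∧
        maxDegLe r H d ∧
        (indepNum H : ℝ) ≤ b * (((n : ℝ) / d) * Real.log ((n : ℝ) / d)) ^ ((1 : ℝ) / r) := by
  refine ⟨indepConst r, zero_lt_one.trans_le (one_le_indepConst r), fun d hd m ↦ ?_⟩
  obtain ⟨N, hlogN, hlarge⟩ := ((eventually_indepConst_pow_mul_log_le r).and
    (Filter.eventually_ge_atTop (3 + d + (2 * r) ^ r + m))).exists
  have hdiv : ((d * N : ℕ) : ℝ) / d = N := by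
    rw [Nat.cast_mul, mul_div_cancel_left₀ _ (by positivity)]
  refine ⟨d * N, (by omega : m ≤ N).trans (Nat.le_mul_of_pos_left N hd), ?_⟩
  rw [hdiv]
  exact exists_maxDegLe_indepNum_le hr hd (by omega) (by omega) (by omega) hlogN
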